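/- arXiv:1810.11345 — 5 statements merged into one kernel-verified Lean document; each statement's English description precedes it below -/
import Mathlib

section
/- For every dimension s ≥ 1 and every N ≥ 1 there exists a finite sequence z_1, …, z_N of points in the s-dimensional unit cube [0,1]^s whose star-discrepancy satisfies D*_N(z_1,…,z_N) < 9·√s/√N. -/
open Finset MeasureTheory

lemma step {X J : Type*} [MeasurableSpace X] (μ : Measure X) [IsProbabilityMeasure μ]
    (S : Finset J) (f : J → X → ℝ) (p l : J → ℝ)
    (hf : ∀ j, Measurable (f j)) (h01 : ∀ j x, f j x = 0 ∨ f j x = 1)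
    (hp : ∀ j, ∫ x, f j x ∂μ = p j) (hl : ∀ j ∈ S, |l j| ≤ 1) (w : J → ℝ) (hw : ∀ j, 0 ≤ w j) :
    ∃ x, ∑ j ∈ S, w j * Real.exp (l j * (f j x - p j)) ≤
      ∑ j ∈ S, w j * Real.exp (p j * l j ^ 2) := by
  have hfi : ∀ j, Integrable (f j) μ := fun j => by
    refine Integrable.of_bound (C := 1) (hf j).aestronglyMeasurable (Filter.Eventually.of_forall fun x => ?_)
    rcases h01 j x with h | h <;> simp [h]
  have hp0 : ∀ j, 0 ≤ p j := fun j => by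
    rw [← hp j]
    exact integral_nonneg fun x => by rcases h01 j x with h | h <;> simp [h]
  have key : ∀ j x, w j * Real.exp (l j * (f j x - p j)) =
      w j * Real.exp (- (l j * p j)) + w j * Real.exp (- (l j * p j)) * (Real.exp (l j) - 1) * f j x := by
    intro j x
    have : l j * (f j x - p j) = -(l j * p j) + l j * f j x := by ring
    rw [this, Real.exp_add]
    rcases h01 j x with h | h <;> simp [h] <;> ring
  have hint : ∀ j ∈ S, Integrable (fun x => w j * Real.exp (l j * (f j x - p j))) μ := by
    intro j _
    simp_rw [key]
    exact (integrable_const _).add ((hfi j).const_mul _)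
  obtain ⟨x, hx⟩ := exists_le_integral (μ := μ) (integrable_finsetSum S hint)
  refine ⟨x, hx.trans ?_⟩
  rw [integral_finsetSum S hint]
  refine Finset.sum_le_sum fun j hj => ?_
  rw [integral_congr_ae (Filter.Eventually.of_forall (key j)),
    integral_add (integrable_const _) ((hfi j).const_mul _), integral_const,
    integral_const_mul, hp]
  simp only [probReal_univ, one_smul]
  have h1 : Real.exp (l j) - 1 - l j ≤ l j ^ 2 :=
    (le_abs_self _).trans (Real.abs_exp_sub_one_sub_id_le (hl j hj))
  have h2 : 1 + p j * (Real.exp (l j) - 1) ≤ Real.exp (l j * p j + p j * l j ^ 2) := by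
    have := Real.add_one_le_exp (l j * p j + p j * l j ^ 2)
    have := mul_le_mul_of_nonneg_left h1 (hp0 j)
    linarith
  calc _ = w j * (Real.exp (- (l j * p j)) * (1 + p j * (Real.exp (l j) - 1))) := by ring
    _ ≤ w j * (Real.exp (- (l j * p j)) * Real.exp (l j * p j + p j * l j ^ 2)) := by
        gcongr; exact hw j
    _ = _ := by rw [← Real.exp_add]; ring_nf

lemma greedy {X J : Type*} [MeasurableSpace X] (μ : Measure X) [IsProbabilityMeasure μ]
    (S : Finset J) (f : J → X → ℝ) (p l : J → ℝ)
    (hf : ∀ j, Measurable (f j)) (h01 : ∀ j x, f j x = 0 ∨ f j x = 1)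
    (hp : ∀ j, ∫ x, f j x ∂μ = p j) (hl : ∀ j ∈ S, |l j| ≤ 1) (N : ℕ) :
    ∀ (w : J → ℝ), (∀ j, 0 ≤ w j) →
    ∃ z : Fin N → X, ∑ j ∈ S, w j * Real.exp (l j * ((∑ n, f j (z n)) - N * p j)) ≤
      ∑ j ∈ S, w j * Real.exp (N * (p j * l j ^ 2)) := by
  induction N with
  | zero => intro w hw; exact ⟨Fin.elim0, by simp⟩
  | succ N ih =>
    intro w hw
    obtain ⟨x, hx⟩ := step μ S f p l hf h01 hp hl
      (fun j => w j * Real.exp (N * (p j * l j ^ 2))) (fun j => mul_nonneg (hw j) (Real.exp_nonneg _))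
    obtain ⟨z, hz⟩ := ih (fun j => w j * Real.exp (l j * (f j x - p j)))
      (fun j => mul_nonneg (hw j) (Real.exp_nonneg _))
    refine ⟨Fin.cons x z, ?_⟩
    calc _ = ∑ j ∈ S, w j * Real.exp (l j * (f j x - p j)) *
          Real.exp (l j * ((∑ n, f j (z n)) - N * p j)) := by
          refine Finset.sum_congr rfl fun j _ => ?_
          rw [mul_assoc, ← Real.exp_add, Fin.sum_univ_succ]
          simp only [Fin.cons_zero, Fin.cons_succ]
          push_cast; ring_nf
      _ ≤ _ := hz
      _ = ∑ j ∈ S, w j * Real.exp (N * (p j * l j ^ 2)) * Real.exp (l j * (f j x - p j)) := by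
          refine Finset.sum_congr rfl fun j _ => by ring
      _ ≤ _ := hx
      _ = _ := by
          refine Finset.sum_congr rfl fun j _ => ?_
          rw [mul_assoc, ← Real.exp_add]
          push_cast; ring_nf

lemma grid_count (s R : ℕ) (hR : 1 ≤ R) :
    (((Fintype.piFinset fun _ : Fin s => range (s * R + 1)).filter
      fun n => ∑ i, n i ≤ s * R).card : ℝ) ≤ (Real.exp 1 * (R + 1)) ^ s := by
  have hR0 : (0 : ℝ) < R := by exact_mod_cast hR
  set t : ℝ := R / (R + 1) with ht
  have ht0 : 0 < t := by positivity
  have ht1 : t < 1 := by rw [ht, div_lt_one (by positivity)]; linarith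
  have hE : 1 ≤ Real.exp 1 * t ^ R := by
    have h1 : t⁻¹ ≤ Real.exp (1 / R) := by
      have := Real.add_one_le_exp (1 / (R : ℝ))
      refine le_trans (le_of_eq ?_) this
      rw [ht]; field_simp; ring
    have h2 : t⁻¹ ^ R ≤ Real.exp 1 := by
      calc t⁻¹ ^ R ≤ Real.exp (1 / R) ^ R := by gcongr
        _ = Real.exp 1 := by rw [← Real.exp_nat_mul]; congr 1; field_simp
    rw [inv_pow] at h2
    have := mul_le_mul_of_nonneg_right h2 (pow_pos ht0 R).le
    rwa [inv_mul_cancel₀ (pow_pos ht0 R).ne'] at this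
  have hgeom : ∑ m ∈ range (s * R + 1), t ^ m ≤ (R + 1 : ℝ) := by
    have h := geom_sum_mul_neg t (s * R + 1)
    have h3 : 1 - t = 1 / (R + 1) := by rw [ht]; field_simp; ring
    rw [h3] at h
    have : 0 ≤ t ^ (s * R + 1) := by positivity
    field_simp at h
    nlinarith
  set S := (Fintype.piFinset fun _ : Fin s => range (s * R + 1)).filter
      fun n => ∑ i, n i ≤ s * R with hS
  calc _ = ∑ n ∈ S, (1 : ℝ) := by simp
    _ ≤ ∑ n ∈ S, Real.exp 1 ^ s * ∏ i, t ^ (n i) := by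
        refine Finset.sum_le_sum fun n hn => ?_
        rw [Finset.prod_pow_eq_pow_sum]
        have hn := (Finset.mem_filter.1 hn).2
        calc (1 : ℝ) ≤ (Real.exp 1 * t ^ R) ^ s := one_le_pow₀ hE
          _ = Real.exp 1 ^ s * t ^ (s * R) := by rw [mul_pow, ← pow_mul, mul_comm R s]
          _ ≤ _ := by
            gcongr Real.exp 1 ^ s * ?_
            exact pow_le_pow_of_le_one ht0.le ht1.le hn
    _ ≤ ∑ n ∈ (Fintype.piFinset fun _ : Fin s => range (s * R + 1)),
          Real.exp 1 ^ s * ∏ i, t ^ (n i) := by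
        refine Finset.sum_le_sum_of_subset_of_nonneg (Finset.filter_subset _ _) fun n _ _ => ?_
        positivity
    _ = Real.exp 1 ^ s * (∑ m ∈ range (s * R + 1), t ^ m) ^ s := by
        rw [← Finset.mul_sum, Finset.sum_prod_piFinset (range (s * R + 1)) (fun _ m => t ^ m)]
        simp
    _ ≤ _ := by rw [mul_pow]; gcongr

lemma bracket (s R : ℕ) (e : ℕ → ℝ) (he : e 0 = 1) (a : Fin s → ℝ) (ha : ∀ i, a i ≤ 1) :
    ∃ n : Fin s → ℕ, ∑ i, n i ≤ s * R ∧ (∀ i, a i ≤ e (n i)) ∧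
      (∑ i, n i = s * R ∨ ∀ i, e (n i + 1) < a i) := by
  classical
  set S := ((Fintype.piFinset fun _ : Fin s => range (s * R + 1)).filter
      fun n => ∑ i, n i ≤ s * R ∧ ∀ i, a i ≤ e (n i)) with hS
  have hmem : ∀ n, n ∈ S ↔ (∑ i, n i ≤ s * R ∧ ∀ i, a i ≤ e (n i)) := by
    intro n
    rw [hS, Finset.mem_filter]
    refine ⟨fun h => h.2, fun h => ⟨?_, h⟩⟩
    rw [Fintype.mem_piFinset]
    intro i
    rw [Finset.mem_range]
    have := Finset.single_le_sum (f := n) (fun _ _ => Nat.zero_le _) (Finset.mem_univ i)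
    omega
  obtain ⟨n, hn, hmax⟩ := Finset.exists_max_image S (fun n => ∑ i, n i)
    ⟨0, (hmem 0).2 ⟨by simp, fun i => by simpa [he] using ha i⟩⟩
  obtain ⟨h1, h2⟩ := (hmem n).1 hn
  refine ⟨n, h1, h2, ?_⟩
  by_contra! hc
  obtain ⟨h3, i, h4⟩ := hc
  have hsum : ∑ j, Function.update n i (n i + 1) j = ∑ j, n j + 1 := by
    rw [Finset.sum_update_of_mem (Finset.mem_univ i),
      ← Finset.add_sum_erase _ n (Finset.mem_univ i), Finset.sdiff_singleton_eq_erase]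
    omega
  have : Function.update n i (n i + 1) ∈ S := by
    refine (hmem _).2 ⟨by rw [hsum]; omega, fun j => ?_⟩
    by_cases hj : j = i
    · subst hj; simpa using h4
    · simpa [hj] using h2 j
  have := hmax _ this
  simp only [hsum] at this
  omega

lemma numeric (j : ℕ) :
    (2 : ℝ) ^ (j + 2) * (Real.exp 1 * (5 * (j + 1) * 100 ^ (j + 1) + 2) + 1) ≤ Real.exp (9 * 4 ^ j) := by
  induction j with
  | zero =>
    have h1 := Real.exp_one_lt_d9
    have h2 := Real.exp_one_gt_d9
    have h3 : Real.exp (9 * 4 ^ 0) = Real.exp 1 ^ 9 := by rw [← Real.exp_nat_mul]; norm_num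
    rw [h3]
    have h4 : (2.7182818283 : ℝ) ^ 9 ≤ Real.exp 1 ^ 9 := by gcongr
    norm_num at h4 ⊢
    linarith
  | succ j ih =>
    have h3 : Real.exp (9 * 4 ^ (j + 1)) = Real.exp (9 * 4 ^ j) * Real.exp (27 * 4 ^ j) := by
      rw [← Real.exp_add]; ring_nf
    have h4 : (400 : ℝ) ≤ Real.exp (27 * 4 ^ j) := by
      calc (400 : ℝ) ≤ 2 ^ 27 := by norm_num
        _ ≤ Real.exp 1 ^ 27 := by gcongr; linarith [Real.exp_one_gt_d9]
        _ = Real.exp 27 := by rw [← Real.exp_nat_mul]; norm_num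
        _ ≤ _ := by
          apply Real.exp_le_exp.2
          have : (1 : ℝ) ≤ 4 ^ j := one_le_pow₀ (by norm_num)
          linarith
    rw [h3]
    calc _ ≤ ((2 : ℝ) ^ (j + 2) * (Real.exp 1 * (5 * (j + 1) * 100 ^ (j + 1) + 2) + 1)) * 400 := by
          have hj : (0 : ℝ) ≤ j := Nat.cast_nonneg j
          have he := Real.exp_pos 1
          rw [pow_succ 2 (j + 2), pow_succ 100 (j + 1)]
          push_cast
          have hp : (0 : ℝ) < 100 ^ (j + 1) := by positivity
          have : (Real.exp 1 * (5 * ((j : ℝ) + 1 + 1) * (100 ^ (j + 1) * 100) + 2) + 1) ≤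
              200 * (Real.exp 1 * (5 * (j + 1) * 100 ^ (j + 1) + 2) + 1) := by
            have h0 : 0 ≤ Real.exp 1 * (j * 100 ^ (j + 1)) := by positivity
            nlinarith
          calc _ ≤ (2 : ℝ) ^ (j + 2) * 2 * (200 * (Real.exp 1 * (5 * (j + 1) * 100 ^ (j + 1) + 2) + 1)) := by gcongr
            _ = _ := by ring
      _ ≤ _ := by gcongr

lemma numeric' (s j : ℕ) (hs : 1 ≤ s) :
    (2 : ℝ) ^ (j + 2) * ((Real.exp 1 * (5 * (j + 1) * 100 ^ (j + 1) + 2)) ^ s + 1) ≤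
      Real.exp (s * (9 * 4 ^ j)) := by
  rw [Real.exp_nat_mul]
  set x : ℝ := Real.exp 1 * (5 * (j + 1) * 100 ^ (j + 1) + 2) with hx
  have hx0 : 0 ≤ x := by positivity
  calc _ ≤ ((2 : ℝ) ^ (j + 2)) ^ s * (x + 1) ^ s := by
        gcongr
        · exact le_self_pow₀ (one_le_pow₀ (by norm_num)) (by omega)
        · have := pow_add_pow_le hx0 zero_le_one (n := s) (by omega)
          simpa using this
    _ = (2 ^ (j + 2) * (x + 1)) ^ s := by rw [mul_pow]
    _ ≤ _ := by
        gcongr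
        exact numeric j

lemma cover (s j : ℕ) (hs : 1 ≤ s) : ∃ Γ : Finset (Fin s → unitInterval),
    (2 : ℝ) ^ (j + 2) * Γ.card ≤ Real.exp (s * (9 * 4 ^ j)) ∧
    ∀ a : Fin s → unitInterval,
      (∃ l ∈ Γ, l ≤ a ∧ ∏ i, (a i : ℝ) - ∏ i, (l i : ℝ) ≤ 1 / 100 ^ (j + 1)) ∧
      (∃ u ∈ Γ, a ≤ u ∧ ∏ i, (u i : ℝ) - ∏ i, (a i : ℝ) ≤ 1 / 100 ^ (j + 1)) := by
  classical
  have hs0 : (0 : ℝ) < s := by exact_mod_cast hs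
  set D : ℝ := 100 ^ (j + 1) with hD
  have hD0 : 0 < D := by positivity
  set R : ℕ := 5 * (j + 1) * 100 ^ (j + 1) with hR
  have hRD : (R : ℝ) = 5 * (j + 1) * D := by rw [hR, hD]; push_cast; ring
  set e : ℕ → ℝ := fun m => Real.exp (-(m / (s * D))) with he
  have he0 : e 0 = 1 := by simp [he]
  have he1 : ∀ m, e m ∈ Set.Icc (0 : ℝ) 1 := fun m =>
    ⟨(Real.exp_pos _).le, by rw [he]; simp only [Real.exp_le_one_iff]; simp; positivity⟩
  have heprod : ∀ n : Fin s → ℕ, ∏ i, e (n i) = Real.exp (-(((∑ i, n i : ℕ) : ℝ) / (s * D))) := by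
    intro n
    rw [he]; simp only
    rw [← Real.exp_sum]
    push_cast
    rw [Finset.sum_neg_distrib, Finset.sum_div]
  set g : (Fin s → ℕ) → Fin s → unitInterval := fun n i => ⟨e (n i), he1 (n i)⟩ with hg
  set S := (Fintype.piFinset fun _ : Fin s => range (s * (R + 1) + 1)).filter
      fun n => ∑ i, n i ≤ s * (R + 1) with hS
  have hmem : ∀ n, ∑ i, n i ≤ s * (R + 1) → g n ∈ insert 0 (S.image g) := by
    intro n h
    refine Finset.mem_insert_of_mem (Finset.mem_image_of_mem g ?_)
    rw [hS, Finset.mem_filter]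
    refine ⟨?_, h⟩
    rw [Fintype.mem_piFinset]
    intro i
    rw [Finset.mem_range]
    have := Finset.single_le_sum (f := n) (fun _ _ => Nat.zero_le _) (Finset.mem_univ i)
    omega
  refine ⟨insert 0 (S.image g), ?_, fun a => ?_⟩
  · refine le_trans ?_ (numeric' s j hs)
    have h1 := grid_count s (R + 1) (by omega)
    have h2 : ((insert 0 (S.image g)).card : ℝ) ≤ S.card + 1 := by
      exact_mod_cast (Finset.card_insert_le _ _).trans (Nat.succ_le_succ Finset.card_image_le)
    gcongr
    refine h2.trans ?_
    gcongr
    refine h1.trans (le_of_eq ?_)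
    push_cast
    rw [hRD, hD]; ring
  · obtain ⟨n, h1, h2, h3⟩ := bracket s R e he0 (fun i => (a i : ℝ)) (fun i => (a i).2.2)
    have hau : ∏ i, (a i : ℝ) ≤ ∏ i, e (n i) :=
      Finset.prod_le_prod (fun i _ => (a i).2.1) (fun i _ => h2 i)
    have hu1 : ∏ i, e (n i) ≤ 1 := Finset.prod_le_one (fun i _ => (he1 _).1) (fun i _ => (he1 _).2)
    have ha0 : 0 ≤ ∏ i, (a i : ℝ) := Finset.prod_nonneg fun i _ => (a i).2.1
    rcases h3 with h3 | h3
    · have hsmall : ∏ i, e (n i) ≤ 1 / D := by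
        rw [heprod, h3]
        have : (((s * R : ℕ) : ℝ) / (s * D)) = ((j + 1 : ℕ) : ℝ) * 5 := by
          push_cast; rw [hRD]; field_simp
        rw [this, Real.exp_neg, one_div]
        apply inv_anti₀ hD0
        rw [Real.exp_nat_mul, hD]
        gcongr
        calc (100 : ℝ) ≤ 2.7 ^ 5 := by norm_num
          _ ≤ Real.exp 1 ^ 5 := by gcongr; linarith [Real.exp_one_gt_d9]
          _ = Real.exp 5 := by rw [← Real.exp_nat_mul]; norm_num
      refine ⟨⟨0, Finset.mem_insert_self _ _, fun i => (a i).2.1, ?_⟩,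
        ⟨g n, hmem n (by nlinarith), fun i => h2 i, ?_⟩⟩
      · have : ∏ i : Fin s, (((0 : Fin s → unitInterval) i : unitInterval) : ℝ) = 0 := by
          apply Finset.prod_eq_zero (Finset.mem_univ (⟨0, hs⟩ : Fin s)); simp
        rw [this]; linarith
      · change ∏ i, e (n i) - _ ≤ _
        linarith
    · have hlow : ∏ i, e (n i + 1) ≤ ∏ i, (a i : ℝ) :=
        Finset.prod_le_prod (fun i _ => (he1 _).1) (fun i _ => (h3 i).le)
      have hdiff : ∏ i, e (n i) - ∏ i, e (n i + 1) ≤ 1 / D := by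
        have h5 : ∏ i, e (n i + 1) = (∏ i, e (n i)) * Real.exp (-(1 / D)) := by
          rw [heprod n, heprod (fun i => n i + 1), ← Real.exp_add]
          congr 1
          rw [Finset.sum_add_distrib]
          simp only [Finset.sum_const, Finset.card_univ, Fintype.card_fin, smul_eq_mul, mul_one]
          push_cast
          field_simp
          ring
        have h6 := Real.add_one_le_exp (-(1 / D))
        rw [h5]
        have h7 : 0 < 1 / D := by positivity
        have h8 : 0 ≤ ∏ i, e (n i) := ha0.trans hau
        nlinarith [mul_le_mul_of_nonneg_left h6 h8]
      refine ⟨⟨g (fun i => n i + 1), hmem _ ?_, fun i => (h3 i).le, ?_⟩,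
        ⟨g n, hmem n (by nlinarith), fun i => h2 i, ?_⟩⟩
      · rw [Finset.sum_add_distrib]
        simp only [Finset.sum_const, Finset.card_univ, Fintype.card_fin, smul_eq_mul, mul_one]
        nlinarith
      · change _ - ∏ i, e (n i + 1) ≤ _
        linarith
      · change ∏ i, e (n i) - _ ≤ _
        linarith

/-- Indicator of the anchored box with upper corner `b`. -/
noncomputable def boxInd {s : ℕ} (b x : Fin s → unitInterval) : ℝ :=
  if ∀ i, x i < b i then 1 else 0

lemma measurableSet_box {s : ℕ} (b : Fin s → unitInterval) :
    MeasurableSet {x : Fin s → unitInterval | ∀ i, x i < b i} := by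
  have : {x : Fin s → unitInterval | ∀ i, x i < b i} = Set.univ.pi fun i => Set.Iio (b i) := by
    ext x; simp
  rw [this]
  exact MeasurableSet.univ_pi fun i => measurableSet_Iio

lemma boxInd_eq {s : ℕ} (b : Fin s → unitInterval) :
    boxInd b = Set.indicator {x : Fin s → unitInterval | ∀ i, x i < b i} (fun _ => (1 : ℝ)) := by
  classical
  ext x
  simp [boxInd, Set.indicator_apply]

lemma measurable_boxInd {s : ℕ} (b : Fin s → unitInterval) : Measurable (boxInd b) := by
  rw [boxInd_eq]
  exact measurable_const.indicator (measurableSet_box b)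

lemma integrable_boxInd {s : ℕ} (b : Fin s → unitInterval) : Integrable (boxInd b) volume := by
  rw [boxInd_eq]
  exact (integrable_const _).indicator (measurableSet_box b)

lemma integral_boxInd {s : ℕ} (b : Fin s → unitInterval) :
    ∫ x, boxInd b x = ∏ i, (b i : ℝ) := by
  rw [boxInd_eq, integral_indicator_const _ (measurableSet_box b)]
  have : {x : Fin s → unitInterval | ∀ i, x i < b i} = Set.univ.pi fun i => Set.Iio (b i) := by
    ext x; simp
  rw [this, smul_eq_mul, mul_one, Measure.real, volume_pi_pi, ENNReal.toReal_prod]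
  refine Finset.prod_congr rfl fun i _ => ?_
  rw [unitInterval.volume_Iio, ENNReal.toReal_ofReal (b i).2.1]

lemma boxInd_mono {s : ℕ} {a b : Fin s → unitInterval} (h : a ≤ b) (x : Fin s → unitInterval) :
    boxInd a x ≤ boxInd b x := by
  unfold boxInd
  split_ifs with h1 h2
  · exact le_rfl
  · exact absurd (fun i => (h1 i).trans_le (h i)) h2
  · exact zero_le_one
  · exact le_rfl

lemma boxInd_01 {s : ℕ} (b x : Fin s → unitInterval) : boxInd b x = 0 ∨ boxInd b x = 1 := by
  unfold boxInd
  split_ifs <;> simp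

lemma boxInd_zero {s : ℕ} (hs : 1 ≤ s) (x : Fin s → unitInterval) :
    boxInd 0 x = 0 := by
  unfold boxInd
  rw [if_neg]
  intro h
  exact absurd (h ⟨0, hs⟩) (not_lt.2 (x _).2.1)

lemma main_bound (s N : ℕ) (hs : 1 ≤ s) (T : ℝ) (hT : 9 ≤ T) (hTN : s * T ^ 2 = N) :
    ∃ z : Fin N → (Fin s → unitInterval), ∀ a : Fin s → unitInterval,
      |(∑ n, boxInd a (z n)) - N * ∏ i, (a i : ℝ)| ≤ 8.9 / T * N := by
  classical
  have hT0 : 0 < T := by linarith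
  have hs0 : (0 : ℝ) < s := by exact_mod_cast hs
  choose Γc hcard hcov using fun j => cover s j hs
  let V : (Fin s → unitInterval) → ℝ := fun b => ∏ i, (b i : ℝ)
  have hV0 : ∀ b, 0 ≤ V b := fun b => Finset.prod_nonneg fun i _ => (b i).2.1
  have hV1 : ∀ b, V b ≤ 1 := fun b =>
    Finset.prod_le_one (fun i _ => (b i).2.1) (fun i _ => (b i).2.2)
  have hVz : V 0 = 0 :=
    Finset.prod_eq_zero (Finset.mem_univ (⟨0, hs⟩ : Fin s)) (by simp)
  let Γ : ℕ → Finset (Fin s → unitInterval) := fun k => Nat.casesOn k {0} Γc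
  have hlow : ∀ k a, ∃ l ∈ Γ k, l ≤ a ∧ V a - V l ≤ 1 / 100 ^ k := by
    intro k a
    cases k with
    | zero => exact ⟨0, Finset.mem_singleton_self _, fun i => (a i).2.1, by
        rw [hVz]; simpa using hV1 a⟩
    | succ j => exact (hcov j a).1
  choose r hrΓ hrle hrV using hlow
  -- number of levels
  have hex : ∃ K : ℕ, T ≤ 1.4 * 100 ^ K := by
    obtain ⟨K, hK⟩ := pow_unbounded_of_one_lt T (by norm_num : (1 : ℝ) < 100)
    exact ⟨K, by linarith⟩
  obtain ⟨K, hK, hKmin⟩ : ∃ K : ℕ, T ≤ 1.4 * 100 ^ K ∧ ∀ k < K, 1.4 * 100 ^ k < T :=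
    ⟨Nat.find hex, Nat.find_spec hex, fun k hk => not_le.1 (Nat.find_min hex hk)⟩
  have hK1 : K ≠ 0 := by
    rintro rfl
    norm_num at hK
    linarith
  obtain ⟨K', rfl⟩ := Nat.exists_eq_succ_of_ne_zero hK1
  -- the parameters
  let f : ((_ : ℕ) × (Fin s → unitInterval)) × Bool → (Fin s → unitInterval) → ℝ :=
    fun j x => boxInd j.1.2 x - boxInd (r j.1.1 j.1.2) x
  let p : ((_ : ℕ) × (Fin s → unitInterval)) × Bool → ℝ := fun j => V j.1.2 - V (r j.1.1 j.1.2)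
  let sg : Bool → ℝ := fun b => if b then 1 else -1
  have hsg : ∀ b, |sg b| = 1 := by intro b; cases b <;> simp [sg]
  let l : ((_ : ℕ) × (Fin s → unitInterval)) × Bool → ℝ := fun j => sg j.2 * (3 * 20 ^ j.1.1 / T)
  let w : ((_ : ℕ) × (Fin s → unitInterval)) × Bool → ℝ :=
    fun j => Real.exp (-(2 * (s * (9 * 4 ^ j.1.1))))
  let S : Finset (((_ : ℕ) × (Fin s → unitInterval)) × Bool) :=
    ((range (K' + 1)).sigma fun k => Γ (k + 1)) ×ˢ Finset.univ
  have hl1 : ∀ k < K' + 1, 3 * 20 ^ k / T ≤ 1 := by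
    intro k hk
    rw [div_le_one hT0]
    cases k with
    | zero => norm_num; linarith
    | succ k =>
      have h1 := hKmin _ hk
      have h2 : (100 : ℝ) ^ (k + 1) = 20 ^ (k + 1) * 5 ^ (k + 1) := by
        rw [← mul_pow]; norm_num
      have h3 : (5 : ℝ) ≤ 5 ^ (k + 1) := le_self_pow₀ (by norm_num) (by omega)
      have h4 : (0 : ℝ) < 20 ^ (k + 1) := by positivity
      rw [h2] at h1
      nlinarith
  obtain ⟨z, hz⟩ := greedy (volume : Measure (Fin s → unitInterval)) S f p l
    (fun j => (measurable_boxInd _).sub (measurable_boxInd _))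
    (fun j x => by
      have h1 := boxInd_mono (hrle j.1.1 j.1.2) x
      rcases boxInd_01 j.1.2 x with h2 | h2 <;>
        rcases boxInd_01 (r j.1.1 j.1.2) x with h3 | h3 <;> simp only [f, h2, h3] at h1 ⊢ <;>
        first | (norm_num; done) | (norm_num at h1; done))
    (fun j => by
      simp only [f, p, V]
      rw [integral_sub (integrable_boxInd _) (integrable_boxInd _), integral_boxInd,
        integral_boxInd])
    (fun j hj => by
      simp only [S, Finset.mem_product, Finset.mem_sigma, Finset.mem_range] at hj
      simp only [l]
      rw [abs_mul, hsg, one_mul, abs_of_pos (by positivity)]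
      exact hl1 _ hj.1.1)
    N w (fun j => (Real.exp_pos _).le)
  have htot : ∑ j ∈ S, w j * Real.exp (N * (p j * l j ^ 2)) ≤ 1 := by
    calc _ ≤ ∑ j ∈ S, Real.exp (-(s * (9 * 4 ^ j.1.1))) := by
          refine Finset.sum_le_sum fun j hj => ?_
          simp only [w]
          rw [← Real.exp_add]
          apply Real.exp_le_exp.2
          have h1 : p j ≤ 1 / 100 ^ j.1.1 := hrV _ _
          have h2 : l j ^ 2 = 9 * 400 ^ j.1.1 / T ^ 2 := by
            simp only [l]
            rw [mul_pow, ← sq_abs (sg _), hsg, div_pow, mul_pow, ← pow_mul, mul_comm _ 2, pow_mul]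
            norm_num
          have h3 : N * (p j * l j ^ 2) ≤ s * (9 * 4 ^ j.1.1) := by
            calc (N : ℝ) * (p j * l j ^ 2) ≤ N * (1 / 100 ^ j.1.1 * l j ^ 2) := by gcongr
              _ = (s : ℝ) * (9 * 4 ^ j.1.1) := by
                rw [h2, ← hTN, show (400 : ℝ) = 100 * 4 by norm_num, mul_pow]
                field_simp
          linarith
      _ = ∑ k ∈ range (K' + 1), 2 * ((Γ (k + 1)).card * Real.exp (-(s * (9 * 4 ^ k)))) := by
          simp only [S]
          rw [Finset.sum_product, Finset.sum_sigma]
          refine Finset.sum_congr rfl fun k _ => ?_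
          simp
          ring
      _ ≤ ∑ k ∈ range (K' + 1), 1 / 2 * (1 / 2 : ℝ) ^ k := by
          refine Finset.sum_le_sum fun k _ => ?_
          have h := hcard k
          change (2 : ℝ) ^ (k + 2) * ((Γ (k + 1)).card : ℝ) ≤ _ at h
          rw [Real.exp_neg, one_div_pow, ← div_eq_mul_inv]
          have hE := Real.exp_pos (s * (9 * 4 ^ k))
          generalize Real.exp (s * (9 * 4 ^ k)) = E at h hE ⊢
          rw [← mul_div_assoc, div_le_iff₀ hE]
          field_simp
          rw [pow_add] at h
          linarith
      _ ≤ 1 := by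
          rw [← Finset.mul_sum]
          have h := geom_sum_mul_neg (1 / 2 : ℝ) (K' + 1)
          have : (0 : ℝ) < (1 / 2) ^ (K' + 1) := by positivity
          linarith
  have hterm : ∀ k < K' + 1, ∀ b ∈ Γ (k + 1),
      |((∑ n, boxInd b (z n)) - N * V b) - ((∑ n, boxInd (r k b) (z n)) - N * V (r k b))| ≤
        6 * (N / T) * (1 / 5) ^ k := by
    intro k hk b hb
    have h1 : ∀ c : Bool, sg c * (((∑ n, boxInd b (z n)) - N * V b) -
        ((∑ n, boxInd (r k b) (z n)) - N * V (r k b))) ≤ 6 * (N / T) * (1 / 5) ^ k := by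
      intro c
      have hj : ((⟨k, b⟩, c) : ((_ : ℕ) × (Fin s → unitInterval)) × Bool) ∈ S := by
        simp [S, hk, hb]
      have h2 := (Finset.single_le_sum
        (f := fun j => w j * Real.exp (l j * ((∑ n, f j (z n)) - N * p j)))
        (fun j _ => mul_nonneg (Real.exp_pos _).le (Real.exp_pos _).le) hj).trans (hz.trans htot)
      simp only [w, f, p, l] at h2
      rw [← Real.exp_add, Real.exp_le_one_iff, Finset.sum_sub_distrib] at h2
      set X := sg c * (((∑ n, boxInd b (z n)) - N * V b) -
        ((∑ n, boxInd (r k b) (z n)) - N * V (r k b))) with hX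
      have h3 : 3 * 20 ^ k / T * X ≤ 2 * (s * (9 * 4 ^ k)) := by
        rw [hX]; linarith
      have h4 : 2 * (s * (9 * 4 ^ k)) = 3 * 20 ^ k / T * (6 * (N / T) * (1 / 5) ^ k) := by
        rw [← hTN, show (20 : ℝ) = 4 * 5 by norm_num, mul_pow, one_div_pow]
        field_simp
        norm_num
      rw [h4] at h3
      exact le_of_mul_le_mul_left h3 (by positivity)
    have ht := h1 true
    have hf := h1 false
    simp only [sg] at ht hf
    rw [abs_le]
    constructor
    · norm_num at hf ⊢; linarith
    · norm_num at ht ⊢; linarith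
  have hchain : ∀ k ≤ K' + 1, ∀ b ∈ Γ k, |(∑ n, boxInd b (z n)) - N * V b| ≤
      6 * (N / T) * ∑ i ∈ range k, (1 / 5 : ℝ) ^ i := by
    intro k
    induction k with
    | zero =>
      intro _ b hb
      have hb : b = 0 := Finset.mem_singleton.1 hb
      subst hb
      simp [boxInd_zero hs, hVz]
    | succ k ih =>
      intro hk b hb
      have h1 := ih (by omega) (r k b) (hrΓ k b)
      have h2 := hterm k (by omega) b hb
      rw [Finset.sum_range_succ, mul_add]
      have h3 := abs_add_le ((∑ n, boxInd (r k b) (z n)) - N * V (r k b))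
        (((∑ n, boxInd b (z n)) - N * V b) - ((∑ n, boxInd (r k b) (z n)) - N * V (r k b)))
      rw [add_sub_cancel] at h3
      linarith
  have hfin : ∀ b ∈ Γ (K' + 1), |(∑ n, boxInd b (z n)) - N * V b| ≤ 7.5 / T * N := by
    intro b hb
    refine (hchain _ le_rfl b hb).trans ?_
    have h := geom_sum_mul_neg (1 / 5 : ℝ) (K' + 1)
    have h0 : (0 : ℝ) < (1 / 5) ^ (K' + 1) := by positivity
    have h1 : ∑ i ∈ range (K' + 1), (1 / 5 : ℝ) ^ i ≤ 5 / 4 := by linarith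
    calc _ ≤ 6 * (N / T) * (5 / 4) := by gcongr
      _ = _ := by ring
  have hδ : (1 : ℝ) / 100 ^ (K' + 1) ≤ 1.4 / T := by
    rw [div_le_div_iff₀ (by positivity) hT0, one_mul]
    exact hK
  refine ⟨z, fun a => ?_⟩
  change |(∑ n, boxInd a (z n)) - N * V a| ≤ _
  obtain ⟨⟨b, hb, hba, hbV⟩, ⟨u, hu, hau, huV⟩⟩ := hcov K' a
  change V a - V b ≤ _ at hbV
  change V u - V a ≤ _ at huV
  have hb' := abs_le.1 (hfin b hb)
  have hu' := abs_le.1 (hfin u hu)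
  have e1 : ∑ n, boxInd b (z n) ≤ ∑ n, boxInd a (z n) :=
    Finset.sum_le_sum fun n _ => boxInd_mono hba _
  have e2 : ∑ n, boxInd a (z n) ≤ ∑ n, boxInd u (z n) :=
    Finset.sum_le_sum fun n _ => boxInd_mono hau _
  have hN0 : (0 : ℝ) ≤ N := Nat.cast_nonneg N
  have e3 : N * (V a - V b) ≤ N * (1.4 / T) := by gcongr; linarith
  have e4 : N * (V u - V a) ≤ N * (1.4 / T) := by gcongr; linarith
  have e5 : 8.9 / T * (N : ℝ) = 7.5 / T * N + N * (1.4 / T) := by ring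
  rw [abs_le]
  constructor <;> linarith [hb'.1, hu'.2]

/-- **Main theorem (Pasing–Weiß).** For every dimension `s ≥ 1` and every `N ≥ 1` there is a
finite sequence `z 1, …, z N` of points in the `s`-dimensional unit cube whose star-discrepancy
`D*_N(z) = sup_{a ∈ [0,1]^s} | #{n : z n ∈ [0,a)} / N − ∏ i, a i |` is less than `9 √s / √N`. -/
theorem star_discrepancy_bound (s N : ℕ) (hs : 1 ≤ s) (hN : 1 ≤ N) :
    ∃ z : Fin N → (Fin s → ℝ),
      (∀ n, ∀ i, z n i ∈ Set.Icc (0 : ℝ) 1) ∧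
      sSup { d : ℝ | ∃ a : Fin s → ℝ, (∀ i, a i ∈ Set.Icc (0 : ℝ) 1) ∧
          d = |((Finset.univ.filter fun n : Fin N => ∀ i, z n i < a i).card : ℝ) / N
                - ∏ i, a i| }
        < 9 * Real.sqrt s / Real.sqrt N := by
  have hs0 : (0 : ℝ) < s := by exact_mod_cast hs
  have hN0 : (0 : ℝ) < N := by exact_mod_cast hN
  have hss : 0 < Real.sqrt s := Real.sqrt_pos.2 hs0
  have hsN : 0 < Real.sqrt N := Real.sqrt_pos.2 hN0
  set T : ℝ := Real.sqrt N / Real.sqrt s with hT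
  have hT0 : 0 < T := by positivity
  have hgoal : 9 * Real.sqrt s / Real.sqrt N = 9 / T := by rw [hT]; field_simp
  rw [hgoal]
  by_cases h9 : 9 ≤ T
  · have hTN : s * T ^ 2 = N := by
      rw [hT, div_pow, Real.sq_sqrt hs0.le, Real.sq_sqrt hN0.le]; field_simp
    obtain ⟨z, hz⟩ := main_bound s N hs T h9 hTN
    refine ⟨fun n i => (z n i : ℝ), fun n i => (z n i).2, ?_⟩
    have hlt : 8.9 / T < 9 / T := by gcongr; norm_num
    refine lt_of_le_of_lt (Real.sSup_le ?_ (by positivity)) hlt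
    rintro d ⟨a, ha, rfl⟩
    have h := hz fun i => ⟨a i, ha i⟩
    have hc : ∑ n, boxInd (fun i => (⟨a i, ha i⟩ : unitInterval)) (z n) =
        ((Finset.univ.filter fun n : Fin N => ∀ i, (z n i : ℝ) < a i).card : ℝ) := by
      simp only [boxInd]
      rw [Finset.sum_boole]
      rfl
    rw [hc] at h
    simp only at h
    set c := ((Finset.univ.filter fun n : Fin N => ∀ i, (z n i : ℝ) < a i).card : ℝ) with hcdef
    have h2 : c / N - ∏ i, a i = (c - N * ∏ i, a i) / N := by field_simp
    rw [h2, abs_div, abs_of_pos hN0, div_le_iff₀ hN0]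
    exact h
  · push Not at h9
    refine ⟨fun _ _ => 0, fun _ _ => by simp, ?_⟩
    have h1 : 1 < 9 / T := by rw [lt_div_iff₀ hT0]; linarith
    refine lt_of_le_of_lt (Real.sSup_le ?_ zero_le_one) h1
    rintro d ⟨a, ha, rfl⟩
    have h2 : 0 ≤ ∏ i, a i := Finset.prod_nonneg fun i _ => (ha i).1
    have h3 : ∏ i, a i ≤ 1 := Finset.prod_le_one (fun i _ => (ha i).1) (fun i _ => (ha i).2)
    have h4 : ((Finset.univ.filter fun n : Fin N => ∀ i, (0 : ℝ) < a i).card : ℝ) / N ≤ 1 := by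
      rw [div_le_one hN0]
      exact_mod_cast (Finset.card_le_univ _).trans (by simp)
    have h5 : 0 ≤ ((Finset.univ.filter fun n : Fin N => ∀ i, (0 : ℝ) < a i).card : ℝ) / N := by
      positivity
    rw [abs_le]
    constructor <;> linarith
end

section
/- For every s ∈ ℕ, s ≥ 1, and every 0 < δ ≤ 1, there exists a δ-bracketing cover of [0,1]^s of cardinality at most 2^{s−2}·(s^s/s!)·(δ^{−1}+1)^s + (1/2)·(δ^{−1}+1); that is, the bracketing number satisfies N_[](s,δ) ≤ 2^{s−2}·(s^s/s!)·(δ^{−1}+1)^s + (1/2)·(δ^{−1}+1). -/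
open Finset

/-- `B` is a `δ`-bracketing cover of `[0,1]^s`: a finite set of pairs `(v, w)` of points of the
unit cube with `v ≤ w` componentwise and `∏ i, w i − ∏ i, v i ≤ δ`, such that every point `x` of
the unit cube satisfies `v ≤ x ≤ w` componentwise for some `(v, w) ∈ B`. -/
def IsBracketingCover (s : ℕ) (δ : ℝ) (B : Finset ((Fin s → ℝ) × (Fin s → ℝ))) : Prop :=
  (∀ p ∈ B, (∀ i, p.1 i ∈ Set.Icc (0 : ℝ) 1) ∧ (∀ i, p.2 i ∈ Set.Icc (0 : ℝ) 1) ∧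
      p.1 ≤ p.2 ∧ ∏ i, p.2 i - ∏ i, p.1 i ≤ δ) ∧
  ∀ x : Fin s → ℝ, (∀ i, x i ∈ Set.Icc (0 : ℝ) 1) → ∃ p ∈ B, p.1 ≤ x ∧ x ≤ p.2

/-- A step in the recursion over the strips of the first coordinate. -/
lemma strip_cover (s N : ℕ) (hN : s + 1 ≤ N)
    (ih : ∀ n : ℕ, s ≤ n → ∃ B : Finset ((Fin s → ℝ) × (Fin s → ℝ)),
      IsBracketingCover s ((s : ℝ) / n) B ∧ B.card ≤ n.choose s)
    (m : ℕ) (hm : s + 1 ≤ m) (hmN : m ≤ N) :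
    ∃ B : Finset ((Fin (s + 1) → ℝ) × (Fin (s + 1) → ℝ)),
      ((∀ p ∈ B, (∀ i, p.1 i ∈ Set.Icc (0 : ℝ) 1) ∧ (∀ i, p.2 i ∈ Set.Icc (0 : ℝ) 1) ∧
        p.1 ≤ p.2 ∧ ∏ i, p.2 i - ∏ i, p.1 i ≤ ((s : ℝ) + 1) / N) ∧
      ∀ x : Fin (s + 1) → ℝ, (∀ i, x i ∈ Set.Icc (0 : ℝ) 1) → x 0 ≤ (m : ℝ) / N →
        ∃ p ∈ B, p.1 ≤ x ∧ x ≤ p.2) ∧ B.card ≤ m.choose (s + 1) := by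
  classical
  have hN0 : (0 : ℝ) < N := by
    have : 0 < N := by omega
    exact_mod_cast this
  induction m, hm using Nat.le_induction with
  | base =>
    have h1 : ((s : ℝ) + 1) / N ≤ 1 := by
      rw [div_le_one hN0]; exact_mod_cast hN
    have h0 : 0 ≤ ((s : ℝ) + 1) / N := by positivity
    refine ⟨{(fun _ => 0, Fin.cons (((s : ℝ) + 1) / N) (fun _ => 1))}, ⟨?_, ?_⟩, by simp⟩
    · intro p hp
      rw [Finset.mem_singleton] at hp
      subst hp
      refine ⟨fun i => by simp, ?_, ?_, ?_⟩
      · intro i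
        refine Fin.cases ?_ (fun j => ?_) i
        · simpa using ⟨h0, h1⟩
        · simp
      · intro i
        refine Fin.cases ?_ (fun j => ?_) i
        · simpa using h0
        · simp
      · simp [Fin.prod_univ_succ]
    · intro x hx hx0
      refine ⟨_, Finset.mem_singleton_self _, fun i => (hx i).1, fun i => ?_⟩
      refine Fin.cases ?_ (fun j => ?_) i
      · simpa using hx0
      · simpa using (hx j.succ).2
  | succ m hm IH =>
    obtain ⟨B, ⟨hB, hBc⟩, hcard⟩ := IH (by omega)
    obtain ⟨C, ⟨hC, hCc⟩, hCcard⟩ := ih m (by omega)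
    have hm0 : (0 : ℝ) < m := by
      have : 0 < m := by omega
      exact_mod_cast this
    have hm1 : ((m : ℝ) + 1) / N ≤ 1 := by
      rw [div_le_one hN0]; exact_mod_cast hmN
    have hlt : (m : ℝ) / N ≤ ((m : ℝ) + 1) / N := by gcongr; linarith
    have hp0 : 0 ≤ (m : ℝ) / N := by positivity
    refine ⟨B ∪ C.image (fun p => ((Fin.cons ((m : ℝ) / N) p.1 : Fin (s + 1) → ℝ),
      (Fin.cons (((m : ℝ) + 1) / N) p.2 : Fin (s + 1) → ℝ))), ⟨?_, ?_⟩, ?_⟩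
    · intro p hp
      rcases Finset.mem_union.1 hp with hp | hp
      · exact hB p hp
      · obtain ⟨q, hq, rfl⟩ := Finset.mem_image.1 hp
        obtain ⟨q1, q2, q3, q4⟩ := hC q hq
        refine ⟨?_, ?_, ?_, ?_⟩
        · intro i
          refine Fin.cases ?_ (fun j => ?_) i
          · simpa using ⟨hp0, hlt.trans hm1⟩
          · simpa using q1 j
        · intro i
          refine Fin.cases ?_ (fun j => ?_) i
          · simpa using ⟨hp0.trans hlt, hm1⟩
          · simpa using q2 j
        · intro i
          refine Fin.cases ?_ (fun j => ?_) i
          · simpa using hlt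
          · simpa using q3 j
        · simp only [Fin.prod_univ_succ, Fin.cons_zero, Fin.cons_succ]
          have hw : ∏ i, q.2 i ≤ 1 :=
            Finset.prod_le_one (fun i _ => (q2 i).1) (fun i _ => (q2 i).2)
          have h1 : (m : ℝ) / N * (∏ i, q.2 i - ∏ i, q.1 i) ≤ (m : ℝ) / N * ((s : ℝ) / m) :=
            mul_le_mul_of_nonneg_left q4 hp0
          have h2 : (m : ℝ) / N * ((s : ℝ) / m) = (s : ℝ) / N := by field_simp
          have h3 : 1 / (N : ℝ) * ∏ i, q.2 i ≤ 1 / (N : ℝ) * 1 :=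
            mul_le_mul_of_nonneg_left hw (by positivity)
          rw [h2] at h1
          rw [add_div, add_div, add_mul]
          linarith
    · intro x hx hx0
      by_cases hxm : x 0 ≤ (m : ℝ) / N
      · obtain ⟨p, hp, h⟩ := hBc x hx hxm
        exact ⟨p, Finset.mem_union_left _ hp, h⟩
      · push Not at hxm
        obtain ⟨p, hp, h1, h2⟩ := hCc (fun j => x j.succ) (fun j => hx j.succ)
        refine ⟨_, Finset.mem_union_right _ (Finset.mem_image_of_mem _ hp), ?_, ?_⟩
        · intro i
          refine Fin.cases ?_ (fun j => ?_) i
          · simpa using hxm.le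
          · simpa using h1 j
        · intro i
          refine Fin.cases ?_ (fun j => ?_) i
          · simpa using hx0
          · simpa using h2 j
    · calc _ ≤ B.card + _ := Finset.card_union_le _ _
        _ ≤ B.card + C.card := by gcongr; exact Finset.card_image_le
        _ ≤ m.choose (s + 1) + m.choose s := by gcongr
        _ = _ := by rw [Nat.choose_succ_succ', add_comm]

/-- There is an `s/n`-bracketing cover with at most `n.choose s` elements. -/
lemma cover_choose (s : ℕ) : ∀ n : ℕ, s ≤ n → ∃ B : Finset ((Fin s → ℝ) × (Fin s → ℝ)),
      IsBracketingCover s ((s : ℝ) / n) B ∧ B.card ≤ n.choose s := by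
  induction s with
  | zero =>
    intro n _
    refine ⟨{(fun _ => 0, fun _ => 0)}, ⟨?_, ?_⟩, by simp⟩
    · intro p hp
      simp
    · intro x _
      exact ⟨_, Finset.mem_singleton_self _, fun i => i.elim0, fun i => i.elim0⟩
  | succ s ih =>
    intro n hn
    obtain ⟨B, ⟨hB, hBc⟩, hcard⟩ := strip_cover s n hn ih n hn le_rfl
    refine ⟨B, ⟨?_, fun x hx => hBc x hx ?_⟩, hcard⟩
    · push_cast
      exact hB
    · have : (n : ℝ) ≠ 0 := by
        have : n ≠ 0 := by omega
        exact_mod_cast this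
      rw [div_self this]
      exact (hx 0).2

/-- **Improved Gnewuch bound.** For `s ≥ 1` and `0 < δ ≤ 1` there is a `δ`-bracketing cover of
`[0,1]^s` of cardinality at most `2^(s-2) (s^s / s!) (δ⁻¹ + 1)^s + (1/2)(δ⁻¹ + 1)`. -/
theorem bracketing_number_improved_bound (s : ℕ) (hs : 1 ≤ s) (δ : ℝ) (hδ0 : 0 < δ)
    (hδ1 : δ ≤ 1) :
    ∃ B : Finset ((Fin s → ℝ) × (Fin s → ℝ)), IsBracketingCover s δ B ∧
      (B.card : ℝ) ≤ (2 : ℝ) ^ ((s : ℤ) - 2) * ((s : ℝ) ^ s / (Nat.factorial s : ℝ)) *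
          (δ⁻¹ + 1) ^ s + (1 / 2) * (δ⁻¹ + 1) := by
  have hs1 : (1 : ℝ) ≤ s := by exact_mod_cast hs
  have hle : (s : ℝ) / δ ≤ (⌈(s : ℝ) / δ⌉₊ : ℝ) := Nat.le_ceil _
  have hub : (⌈(s : ℝ) / δ⌉₊ : ℝ) < (s : ℝ) / δ + 1 := Nat.ceil_lt_add_one (by positivity)
  set n := ⌈(s : ℝ) / δ⌉₊ with hn
  have hsd : (s : ℝ) ≤ s / δ := by
    rw [le_div_iff₀ hδ0]; nlinarith
  have hsn : s ≤ n := by exact_mod_cast hsd.trans hle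
  have hn0 : (0 : ℝ) < n := by linarith
  have hδn : (s : ℝ) / n ≤ δ := by
    rw [div_le_iff₀ hδ0] at hle
    rw [div_le_iff₀ hn0]; linarith
  obtain ⟨B, ⟨hB, hBc⟩, hcard⟩ := cover_choose s n hsn
  refine ⟨B, ⟨fun p hp => ?_, hBc⟩, ?_⟩
  · obtain ⟨h1, h2, h3, h4⟩ := hB p hp
    exact ⟨h1, h2, h3, h4.trans hδn⟩
  have hinv : 0 < δ⁻¹ := inv_pos.2 hδ0
  have hnle : (n : ℝ) ≤ s * (δ⁻¹ + 1) := by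
    rw [div_eq_mul_inv] at hub; nlinarith
  have hc : (B.card : ℝ) ≤ (s : ℝ) ^ s / (Nat.factorial s : ℝ) * (δ⁻¹ + 1) ^ s := by
    calc (B.card : ℝ) ≤ (n.choose s : ℝ) := by exact_mod_cast hcard
      _ ≤ (n : ℝ) ^ s / (Nat.factorial s : ℝ) := Nat.choose_le_pow_div s n
      _ ≤ (s * (δ⁻¹ + 1)) ^ s / (Nat.factorial s : ℝ) := by gcongr
      _ = _ := by rw [mul_pow]; ring
  rcases Nat.lt_or_ge s 2 with h | h
  · obtain rfl : s = 1 := by omega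
    norm_num at hc ⊢
    linarith
  · have h2 : (1 : ℝ) ≤ (2 : ℝ) ^ ((s : ℤ) - 2) := one_le_zpow₀ (by norm_num) (by omega)
    have h3 : 0 ≤ (s : ℝ) ^ s / (Nat.factorial s : ℝ) * (δ⁻¹ + 1) ^ s := by positivity
    rw [mul_assoc]
    nlinarith [mul_le_mul_of_nonneg_right h2 h3]
end

section
/- For every s ∈ ℕ, s ≥ 1, and every 0 < δ ≤ 1, there exists a δ-bracketing cover of [0,1]^s of cardinality at most 2^{s−1}·(s^s/s!)·(δ^{−1}+1)^s; that is, N_[](s,δ) ≤ 2^{s−1}·(s^s/s!)·(δ^{−1}+1)^s. -/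
open Finset

lemma cover_aux (s : ℕ) : ∀ m : ℕ, ∃ B : Finset ((Fin s → ℝ) × (Fin s → ℝ)),
    IsBracketingCover s ((s : ℝ) / ((m : ℝ) + 1)) B ∧ B.card ≤ (m + s).choose s := by
  classical
  induction s with
  | zero =>
    intro m
    refine ⟨{(fun _ => 0, fun _ => 0)}, ⟨?_, ?_⟩, ?_⟩
    · intro p _
      refine ⟨fun i => i.elim0, fun i => i.elim0, fun i => i.elim0, ?_⟩
      simp
    · intro x _
      exact ⟨_, Finset.mem_singleton_self _, fun i => i.elim0, fun i => i.elim0⟩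
    · simp
  | succ s ih =>
    intro m
    choose C hC hcard using ih
    have hm : (0 : ℝ) < (m : ℝ) + 1 := by positivity
    refine ⟨(range (m + 1)).biUnion fun j => (C j).image fun p =>
      ((Fin.cons ((j : ℝ) / ((m : ℝ) + 1)) p.1 : Fin (s + 1) → ℝ),
       (Fin.cons (((j : ℝ) + 1) / ((m : ℝ) + 1)) p.2 : Fin (s + 1) → ℝ)), ⟨?_, ?_⟩, ?_⟩
    · intro p hp
      simp only [mem_biUnion, mem_range, mem_image] at hp
      obtain ⟨j, hj, q, hq, rfl⟩ := hp
      obtain ⟨h1, h2, h3, h4⟩ := (hC j).1 q hq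
      have hj' : (j : ℝ) ≤ m := by exact_mod_cast Nat.lt_succ_iff.mp hj
      have hj0 : (0 : ℝ) ≤ j := Nat.cast_nonneg j
      refine ⟨?_, ?_, ?_, ?_⟩
      · intro i
        refine Fin.cases ?_ (fun i => ?_) i
        · simp only [Fin.cons_zero]
          exact ⟨by positivity, by rw [div_le_one hm]; linarith⟩
        · simpa using h1 i
      · intro i
        refine Fin.cases ?_ (fun i => ?_) i
        · simp only [Fin.cons_zero]
          exact ⟨by positivity, by rw [div_le_one hm]; linarith⟩
        · simpa using h2 i
      · intro i
        refine Fin.cases ?_ (fun i => ?_) i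
        · simp only [Fin.cons_zero]
          gcongr
          linarith
        · simpa using h3 i
      · simp only [Fin.prod_univ_succ, Fin.cons_zero, Fin.cons_succ]
        have hV : ∏ i, q.1 i ≤ 1 := Finset.prod_le_one (fun i _ => (h1 i).1) (fun i _ => (h1 i).2)
        set W := ∏ i, q.2 i
        set V := ∏ i, q.1 i
        have hk : (0 : ℝ) < (j : ℝ) + 1 := by positivity
        rw [le_div_iff₀ hk] at h4
        rw [div_mul_eq_mul_div, div_mul_eq_mul_div, ← sub_div]
        gcongr
        push_cast
        linarith
    · intro x hx
      set t : ℝ := x 0 * ((m : ℝ) + 1) with ht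
      have ht0 : 0 ≤ t := mul_nonneg (hx 0).1 hm.le
      have ht1 : t ≤ (m : ℝ) + 1 := by nlinarith [(hx 0).2]
      have hex : ∃ j : ℕ, j < m + 1 ∧ (j : ℝ) ≤ t ∧ t ≤ (j : ℝ) + 1 := by
        by_cases h : t < (m : ℝ) + 1
        · refine ⟨⌊t⌋₊, ?_, Nat.floor_le ht0, (Nat.lt_floor_add_one t).le⟩
          rw [Nat.floor_lt ht0]
          exact_mod_cast h
        · exact ⟨m, Nat.lt_succ_self m, by linarith, ht1⟩
      obtain ⟨j, hj, hj1, hj2⟩ := hex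
      obtain ⟨q, hq, hq1, hq2⟩ := (hC j).2 (fun i => x i.succ) (fun i => hx i.succ)
      refine ⟨_, mem_biUnion.mpr ⟨j, mem_range.mpr hj, mem_image_of_mem _ hq⟩, ?_, ?_⟩
      · intro i
        refine Fin.cases ?_ (fun i => ?_) i
        · simp only [Fin.cons_zero]
          rwa [div_le_iff₀ hm]
        · simpa using hq1 i
      · intro i
        refine Fin.cases ?_ (fun i => ?_) i
        · simp only [Fin.cons_zero]
          rwa [le_div_iff₀ hm]
        · simpa using hq2 i
    · calc _ ≤ ∑ j ∈ range (m + 1), (j + s).choose s :=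
            card_biUnion_le.trans (sum_le_sum fun j _ => card_image_le.trans (hcard j))
        _ = (m + s + 1).choose (s + 1) := Nat.sum_range_add_choose m s
        _ ≤ _ := le_of_eq (by rw [add_assoc])

/-- **Gnewuch's upper bound for bracketing numbers.** For `s ≥ 1` and `0 < δ ≤ 1` there is a
`δ`-bracketing cover of `[0,1]^s` of cardinality at most `2^(s-1) (s^s / s!) (δ⁻¹ + 1)^s`. -/
theorem bracketing_number_gnewuch_bound (s : ℕ) (hs : 1 ≤ s) (δ : ℝ) (hδ0 : 0 < δ)
    (hδ1 : δ ≤ 1) :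
    ∃ B : Finset ((Fin s → ℝ) × (Fin s → ℝ)), IsBracketingCover s δ B ∧
      (B.card : ℝ) ≤ (2 : ℝ) ^ ((s : ℤ) - 1) * ((s : ℝ) ^ s / (Nat.factorial s : ℝ)) *
        (δ⁻¹ + 1) ^ s := by
  have hsd : (0 : ℝ) ≤ s / δ := by positivity
  obtain ⟨B, hB, hc⟩ := cover_aux s ⌊(s : ℝ) / δ⌋₊
  have hle : (s : ℝ) / ((⌊(s : ℝ) / δ⌋₊ : ℝ) + 1) ≤ δ := by
    rw [div_le_iff₀ (by positivity), mul_comm, ← div_le_iff₀ hδ0]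
    exact (Nat.lt_floor_add_one _).le
  refine ⟨B, ⟨fun p hp => ?_, hB.2⟩, ?_⟩
  · obtain ⟨h1, h2, h3, h4⟩ := hB.1 p hp
    exact ⟨h1, h2, h3, h4.trans hle⟩
  · have h2 : (1 : ℝ) ≤ (2 : ℝ) ^ ((s : ℤ) - 1) := one_le_zpow₀ (by norm_num) (by omega)
    have hfl := Nat.floor_le hsd
    calc (B.card : ℝ) ≤ ((⌊(s : ℝ) / δ⌋₊ + s).choose s : ℝ) := by exact_mod_cast hc
      _ ≤ ((⌊(s : ℝ) / δ⌋₊ + s : ℕ) : ℝ) ^ s / (Nat.factorial s : ℝ) :=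
          Nat.choose_le_pow_div _ _
      _ ≤ ((s : ℝ) / δ + s) ^ s / (Nat.factorial s : ℝ) := by
          push_cast
          gcongr
      _ = 1 * ((s : ℝ) ^ s / (Nat.factorial s : ℝ)) * (δ⁻¹ + 1) ^ s := by
          have : (s : ℝ) / δ + s = s * (δ⁻¹ + 1) := by ring
          rw [this, mul_pow]
          ring
      _ ≤ _ := by gcongr
end

section
/- Let K ≥ 33 and let 32 ≤ k ≤ K−1 be integers. Set a_k = (4/3)(1+k)·log 2 + 1 + log(2^{−k−1} + 1) and let c_{k,K} be the unique positive real satisfying c_{k,K}² = a_k·(2^{−k+1}(1 − 2^{−k}) + (4/3)·c_{k,K}·2^{−K}). Then c_{k,K} ≤ 0.2480726 · k · 2^{−k/2}. -/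
/-- For integers `K ≥ 33` and `32 ≤ k ≤ K − 1`, the unique positive solution `c` of
`c² = a_k (2^(−k+1)(1 − 2^(−k)) + (4/3) c 2^(−K))`, where
`a_k = (4/3)(1+k) log 2 + 1 + log(2^(−k−1) + 1)`, satisfies `c ≤ 0.2480726 · k · 2^(−k/2)`. -/
theorem ck_decay_bound (K k : ℕ) (hK : 33 ≤ K) (hk : 32 ≤ k) (hkK : k ≤ K - 1)
    (c : ℝ) (hcpos : 0 < c)
    (hc : c ^ 2 = ((4 / 3) * (1 + (k : ℝ)) * Real.log 2 + 1
          + Real.log ((2 : ℝ) ^ (-(k : ℤ) - 1) + 1)) *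
        ((2 : ℝ) ^ (-(k : ℤ) + 1) * (1 - (2 : ℝ) ^ (-(k : ℤ)))
          + (4 / 3) * c * (2 : ℝ) ^ (-(K : ℤ)))) :
    c ≤ 0.2480726 * (k : ℝ) * (2 : ℝ) ^ (-(k : ℝ) / 2) := by
  have hk' : (32 : ℝ) ≤ k := by exact_mod_cast hk
  set s : ℝ := (2 : ℝ) ^ (-(k : ℝ) / 2) with hs
  have hs0 : 0 < s := by positivity
  have hq : (2 : ℝ) ^ (-(k : ℤ)) = s ^ 2 := by
    rw [hs, ← Real.rpow_natCast, ← Real.rpow_mul (by norm_num), ← Real.rpow_intCast]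
    congr 1
    push_cast
    ring
  have hs1 : s ≤ 1 / 65536 := by
    have h1 : s ≤ (2 : ℝ) ^ (-(16 : ℝ)) :=
      Real.rpow_le_rpow_of_exponent_le (by norm_num) (by linarith)
    have h2 : (2 : ℝ) ^ (-(16 : ℝ)) = 1 / 65536 := by
      rw [Real.rpow_neg (by norm_num)]
      norm_num
    exact h1.trans_eq h2
  have hq1 : (2 : ℝ) ^ (-(k : ℤ) - 1) = s ^ 2 / 2 := by
    rw [zpow_sub₀ (by norm_num), hq]; norm_num
  have hq2 : (2 : ℝ) ^ (-(k : ℤ) + 1) = 2 * s ^ 2 := by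
    rw [zpow_add₀ (by norm_num), hq]; norm_num; ring
  have hqK : (2 : ℝ) ^ (-(K : ℤ)) ≤ s ^ 2 / 2 := by
    rw [← hq1]
    exact zpow_le_zpow_right₀ (by norm_num) (by omega)
  rw [hq1, hq2, hq] at hc
  have hsq : s ^ 2 ≤ 1 / 65536 ^ 2 := by
    have := pow_le_pow_left₀ hs0.le hs1 2
    norm_num at this ⊢
    linarith
  have hlog : Real.log (s ^ 2 / 2 + 1) ≤ s ^ 2 / 2 := by
    have := Real.log_le_sub_one_of_pos (show 0 < s ^ 2 / 2 + 1 by positivity)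
    linarith
  have hlog0 : 0 ≤ Real.log (s ^ 2 / 2 + 1) := Real.log_nonneg (by nlinarith)
  have hL := Real.log_two_lt_d9
  have hL0 := Real.log_two_gt_d9
  set A : ℝ := (4 / 3) * (1 + (k : ℝ)) * Real.log 2 + 1 + Real.log (s ^ 2 / 2 + 1) with hA
  have hA0 : 0 < A := by positivity
  have hA1 : A ≤ 0.9843274 * k := by
    have h1 : (1 + (k : ℝ)) * Real.log 2 ≤ (1 + (k : ℝ)) * 0.6931471808 :=
      mul_le_mul_of_nonneg_left hL.le (by linarith)
    norm_num at hsq h1 ⊢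
    linarith
  obtain ⟨x, hx⟩ : ∃ x, c = x * s := ⟨c / s, by field_simp⟩
  have hx0 : 0 < x := by
    rw [hx] at hcpos
    exact pos_of_mul_pos_left hcpos hs0.le
  have hmain : x ^ 2 ≤ A * (2 + 2 / 3 * x / 65536) := by
    have hin : 2 * s ^ 2 * (1 - s ^ 2) + 4 / 3 * c * (2 : ℝ) ^ (-(K : ℤ))
        ≤ s ^ 2 * (2 + 2 / 3 * x / 65536) := by
      have h1 : 4 / 3 * c * (2 : ℝ) ^ (-(K : ℤ)) ≤ 4 / 3 * c * (s ^ 2 / 2) :=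
        mul_le_mul_of_nonneg_left hqK (by positivity)
      have h2 : c ≤ x * (1 / 65536) := by
        rw [hx]; exact mul_le_mul_of_nonneg_left hs1 hx0.le
      have h3 : c * s ^ 2 ≤ x * (1 / 65536) * s ^ 2 :=
        mul_le_mul_of_nonneg_right h2 (by positivity)
      have h4 : 0 ≤ s ^ 2 * s ^ 2 := by positivity
      linarith
    have h5 := mul_le_mul_of_nonneg_left hin hA0.le
    rw [← hc, hx] at h5
    have h6 : s ^ 2 * x ^ 2 ≤ s ^ 2 * (A * (2 + 2 / 3 * x / 65536)) := by linarith
    exact le_of_mul_le_mul_left h6 (by positivity)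
  rw [hx]
  refine mul_le_mul_of_nonneg_right ?_ hs0.le
  by_contra! hcon
  have hB : x ^ 2 ≤ 0.9843274 * k * (2 + 2 / 3 * x / 65536) :=
    hmain.trans (mul_le_mul_of_nonneg_right hA1 (by positivity))
  have h7 : 0.9843274 * (k : ℝ) * (2 + 2 / 3 * x / 65536)
      ≤ 0.9843274 * (x / 0.2480726) * (2 + 2 / 3 * x / 65536) := by
    refine mul_le_mul_of_nonneg_right ?_ (by positivity)
    refine mul_le_mul_of_nonneg_left ?_ (by norm_num)
    rw [le_div_iff₀ (by norm_num)]; linarith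
  have h8 : x * x ≤ x * (0.9843274 / 0.2480726 * (2 + 2 / 3 * x / 65536)) := by
    calc x * x = x ^ 2 := by ring
      _ ≤ _ := hB.trans h7
      _ = _ := by ring
  have h9 := le_of_mul_le_mul_left h8 hx0
  norm_num at h9 hcon
  linarith
end

section
/- Let K ≥ 3 and 2 ≤ k ≤ K−1 be integers. Set a_k = (4/3)(1+k)·log 2 + 1 + log(2^{−k−1} + 1) and let c_k be the unique positive real satisfying c_k² = a_k·(2^{−k+1}(1 − 2^{−k}) + (4/3)·c_k·2^{−K}). Then c_k ≤ 1.58. Moreover, setting a_K = (4/3)·K·log 2 + 1 + log(1 + 2^{−K}) and letting c_K be the unique positive real satisfying c_K² = a_K·(2^{−K+1}(1 − 2^{−K}) + (4/3)·c_K·2^{−K}), one has c_K ≤ 1.33. -/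
theorem root_le (a b q c c0 : ℝ) (ha : 0 ≤ a) (hb : 0 ≤ b) (hc : 0 < c) (hc0 : 0 < c0)
    (h : c ^ 2 = a * (b + q * c)) (h0 : a * (b + q * c0) ≤ c0 ^ 2) : c ≤ c0 := by
  by_contra hlt
  push Not at hlt
  have h1 : a * b * c0 ≤ a * b * c := mul_le_mul_of_nonneg_left hlt.le (mul_nonneg ha hb)
  have h2 : c * (a * (b + q * c0)) ≤ c * c0 ^ 2 := mul_le_mul_of_nonneg_left h0 hc.le
  have h3 : c0 * c ^ 2 ≤ c * c0 ^ 2 := by rw [h]; linarith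
  have h4 : 0 < (c0 * c) * (c - c0) := mul_pos (mul_pos hc0 hc) (sub_pos.mpr hlt)
  linarith

theorem mul_pow_bound (m : ℕ) (hm : 3 ≤ m) : ((m : ℝ) + 1) * ((2 : ℝ) ^ m)⁻¹ ≤ 1 / 2 := by
  induction m, hm using Nat.le_induction with
  | base => norm_num
  | succ n hn ih =>
    have hp : 0 < ((2 : ℝ) ^ n)⁻¹ := by positivity
    have hn' : (3 : ℝ) ≤ n := by exact_mod_cast hn
    rw [pow_succ, mul_inv]
    push_cast
    nlinarith

theorem pow_bound (m n : ℕ) (h : m ≤ n) : ((2 : ℝ) ^ n)⁻¹ ≤ ((2 : ℝ) ^ m)⁻¹ := by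
  apply inv_anti₀ (by positivity)
  exact pow_le_pow_right₀ (by norm_num) h

/-- For integers `K ≥ 3` and `2 ≤ k ≤ K − 1`, the unique positive solution `ck` of
`ck² = a_k (2^(−k+1)(1 − 2^(−k)) + (4/3) ck 2^(−K))` with
`a_k = (4/3)(1+k) log 2 + 1 + log(2^(−k−1) + 1)` satisfies `ck ≤ 1.58`; moreover the unique
positive solution `cK` of `cK² = a_K (2^(−K+1)(1 − 2^(−K)) + (4/3) cK 2^(−K))` with
`a_K = (4/3) K log 2 + 1 + log(1 + 2^(−K))` satisfies `cK ≤ 1.33`. -/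
theorem ck_le_and_cK_le (K k : ℕ) (hK : 3 ≤ K) (hk : 2 ≤ k) (hkK : k ≤ K - 1)
    (ck cK : ℝ) (hckpos : 0 < ck) (hcKpos : 0 < cK)
    (hck : ck ^ 2 = ((4 / 3) * (1 + (k : ℝ)) * Real.log 2 + 1
          + Real.log ((2 : ℝ) ^ (-(k : ℤ) - 1) + 1)) *
        ((2 : ℝ) ^ (-(k : ℤ) + 1) * (1 - (2 : ℝ) ^ (-(k : ℤ)))
          + (4 / 3) * ck * (2 : ℝ) ^ (-(K : ℤ))))
    (hcK : cK ^ 2 = ((4 / 3) * (K : ℝ) * Real.log 2 + 1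
          + Real.log (1 + (2 : ℝ) ^ (-(K : ℤ)))) *
        ((2 : ℝ) ^ (-(K : ℤ) + 1) * (1 - (2 : ℝ) ^ (-(K : ℤ)))
          + (4 / 3) * cK * (2 : ℝ) ^ (-(K : ℤ)))) :
    ck ≤ 1.58 ∧ cK ≤ 1.33 := by
  have e1 : (2 : ℝ) ^ (-(k : ℤ)) = ((2 : ℝ) ^ k)⁻¹ := by rw [zpow_neg, zpow_natCast]
  have e2 : (2 : ℝ) ^ (-(K : ℤ)) = ((2 : ℝ) ^ K)⁻¹ := by rw [zpow_neg, zpow_natCast]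
  have e3 : (2 : ℝ) ^ (-(k : ℤ) - 1) = ((2 : ℝ) ^ k)⁻¹ / 2 := by
    rw [zpow_sub₀ (by norm_num), e1, zpow_one]
  have e4 : (2 : ℝ) ^ (-(k : ℤ) + 1) = ((2 : ℝ) ^ k)⁻¹ * 2 := by
    rw [zpow_add₀ (by norm_num), e1, zpow_one]
  have e5 : (2 : ℝ) ^ (-(K : ℤ) + 1) = ((2 : ℝ) ^ K)⁻¹ * 2 := by
    rw [zpow_add₀ (by norm_num), e2, zpow_one]
  rw [e3, e4, e1, e2] at hck
  rw [e5, e2] at hcK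
  have hy := pow_bound (k + 1) K (by omega)
  rw [pow_succ, mul_inv] at hy
  have hx4 := pow_bound 2 k hk
  have hy8 := pow_bound 3 K hK
  have hkx : 3 ≤ k → _ := mul_pow_bound k
  have hkx8 : 3 ≤ k → _ := pow_bound 3 k
  have hKy : 4 ≤ K → ((K : ℝ)) * ((2 : ℝ) ^ K)⁻¹ ≤ 1 / 4 := by
    intro h
    obtain ⟨n, rfl⟩ : ∃ n, K = n + 1 := ⟨K - 1, by omega⟩
    have := mul_pow_bound n (by omega)
    rw [pow_succ, mul_inv]
    push_cast
    linarith
  have hKy16 : 4 ≤ K → _ := pow_bound 4 K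
  have hx2 : k = 2 → ((2 : ℝ) ^ k)⁻¹ = 1 / 4 := by rintro rfl; norm_num
  have hy3 : K = 3 → ((2 : ℝ) ^ K)⁻¹ = 1 / 8 := by rintro rfl; norm_num
  have hx0 : 0 < ((2 : ℝ) ^ k)⁻¹ := by positivity
  have hy0 : 0 < ((2 : ℝ) ^ K)⁻¹ := by positivity
  clear e1 e2 e3 e4 e5
  generalize ((2 : ℝ) ^ k)⁻¹ = x at *
  generalize ((2 : ℝ) ^ K)⁻¹ = y at *
  have hL0 : 0 < Real.log 2 := Real.log_pos (by norm_num)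
  have hL : Real.log 2 < 0.69315 := lt_trans Real.log_two_lt_d9 (by norm_num)
  have hl1 : Real.log (x / 2 + 1) ≤ x / 2 := by
    have := Real.log_le_sub_one_of_pos (show 0 < x / 2 + 1 by linarith)
    linarith
  have hl1' : 0 ≤ Real.log (x / 2 + 1) := Real.log_nonneg (by linarith)
  have hl2 : Real.log (1 + y) ≤ y := by
    have := Real.log_le_sub_one_of_pos (show 0 < 1 + y by linarith)
    linarith
  have hl2' : 0 ≤ Real.log (1 + y) := Real.log_nonneg (by linarith)
  generalize Real.log (x / 2 + 1) = l1 at *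
  generalize Real.log (1 + y) = l2 at *
  generalize Real.log 2 = L at *
  norm_num at hx4 hy8 hkx8 hKy16 hy
  constructor
  · have ha : 0 ≤ 4 / 3 * (1 + (k : ℝ)) * L + 1 + l1 := by positivity
    have hb : 0 ≤ x * 2 * (1 - x) := mul_nonneg (by linarith) (by linarith)
    refine root_le _ _ (4 / 3 * y) ck 1.58 ha hb hckpos (by norm_num)
      (by rw [hck]; ring) ?_
    rcases Nat.lt_or_ge 2 k with h | h
    · have h1 := hkx h
      have h2 := hkx8 h
      have hA : (4 / 3 * (1 + (k : ℝ)) * L + 1 + l1) * x ≤ 0.6 := by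
        have i1 : (((k : ℝ) + 1) * x) * L ≤ 1 / 2 * 0.69315 :=
          mul_le_mul h1 hL.le hL0.le (by norm_num)
        have i2 : l1 * x ≤ 1 / 16 * (1 / 8) :=
          mul_le_mul (by linarith) h2 hx0.le (by norm_num)
        nlinarith
      have hB : x * 2 * (1 - x) + 4 / 3 * y * 1.58 ≤ x * 3.1 := by nlinarith
      have := mul_le_mul_of_nonneg_left hB ha
      norm_num at *
      linarith
    · have hk2 : k = 2 := by omega
      have hx := hx2 hk2
      have hA : 4 / 3 * (1 + (k : ℝ)) * L + 1 + l1 ≤ 3.8978 := by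
        subst hk2
        norm_num
        linarith
      have hB : x * 2 * (1 - x) + 4 / 3 * y * 1.58 ≤ 0.6384 := by
        rw [hx]; norm_num; linarith
      refine (mul_le_mul hA hB ?_ (by norm_num)).trans (by norm_num)
      positivity
  · have ha : 0 ≤ 4 / 3 * (K : ℝ) * L + 1 + l2 := by positivity
    have hb : 0 ≤ y * 2 * (1 - y) := mul_nonneg (by linarith) (by linarith)
    refine root_le _ _ (4 / 3 * y) cK 1.33 ha hb hcKpos (by norm_num)
      (by rw [hcK]; ring) ?_
    rcases Nat.lt_or_ge 3 K with h | h
    · have h1 := hKy h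
      have h2 := hKy16 h
      have hA : (4 / 3 * (K : ℝ) * L + 1 + l2) * y ≤ 0.3 := by
        have i1 : ((K : ℝ) * y) * L ≤ 1 / 4 * 0.69315 :=
          mul_le_mul h1 hL.le hL0.le (by norm_num)
        have i2 : l2 * y ≤ 1 / 16 * (1 / 16) :=
          mul_le_mul (by linarith) (by linarith) hy0.le (by norm_num)
        nlinarith
      have hB : y * 2 * (1 - y) + 4 / 3 * y * 1.33 ≤ y * 3.8 := by nlinarith
      have := mul_le_mul_of_nonneg_left hB ha
      norm_num at *
      linarith
    · have hK3 : K = 3 := by omega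
      have hx := hy3 hK3
      have hA : 4 / 3 * (K : ℝ) * L + 1 + l2 ≤ 3.8978 := by
        subst hK3
        norm_num
        linarith
      have hB : y * 2 * (1 - y) + 4 / 3 * y * 1.33 ≤ 0.4405 := by
        rw [hx]; norm_num
      refine (mul_le_mul hA hB ?_ (by norm_num)).trans (by norm_num)
      positivity
end
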